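/- Let M be a weight sequence and let N be a log-convex weight sequence. Then the following are equivalent: (a) N ≼ M, i.e. sup_{j≥1} (N_j/M_j)^{1/j} < ∞; (b) there exist c ≥ 1 and C ≥ 1 with v_N(c·t) ≤ C·v_M(t) for all t ≥ 0; (c) ⋃_{n∈ℕ, n≥1} H^∞_{v_{M,n}}(ℂ) ⊆ ⋃_{n∈ℕ, n≥1} H^∞_{v_{N,n}}(ℂ); (d) ⋂_{c>0} H^∞_{v_{M,c}}(ℂ) ⊆ ⋂_{c>0} H^∞_{v_{N,c}}(ℂ). -/

import Mathlib

open Filter Set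

/-- The associated weight function `ω_M(t) = sup_j log(t^j / M_j)` for `t ≠ 0`, `ω_M(0) = 0`. -/
noncomputable def omegaM (M : ℕ → ℝ) (t : ℝ) : ℝ :=
  if t = 0 then 0 else ⨆ j : ℕ, Real.log (t ^ j / M j)

/-- `v_M(t) = exp(-ω_M(t))`. -/
noncomputable def vM (M : ℕ → ℝ) (t : ℝ) : ℝ :=
  Real.exp (-(omegaM M t))

/-- `v_{M,c}(t) = exp(-ω_M(c·t))`. -/
noncomputable def vMc (M : ℕ → ℝ) (c t : ℝ) : ℝ :=
  Real.exp (-(omegaM M (c * t)))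

/-- `v_M^c(t) = exp(-c·ω_M(t))`. -/
noncomputable def vMpow (M : ℕ → ℝ) (c t : ℝ) : ℝ :=
  Real.exp (-(c * omegaM M t))

/-- A weight sequence: positive, `M_0 = 1`, `(M_j)^{1/j} → ∞`. -/
def WeightSeq (M : ℕ → ℝ) : Prop :=
  (∀ j, 0 < M j) ∧ M 0 = 1 ∧
    Tendsto (fun j : ℕ => (M j) ^ (1 / (j : ℝ))) atTop atTop

/-- Log-convexity: `M_j² ≤ M_{j-1}·M_{j+1}` for `j ≥ 1`. -/
def LogConvexSeq (M : ℕ → ℝ) : Prop :=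
  ∀ j : ℕ, 1 ≤ j → (M j) ^ 2 ≤ M (j - 1) * M (j + 1)

/-- The class `LC`: normalized log-convex weight sequences. -/
def LCset (M : ℕ → ℝ) : Prop :=
  WeightSeq M ∧ LogConvexSeq M ∧ 1 ≤ M 1

/-- Weighted space of entire functions with `sup |f(z)|·v(|z|) < ∞`. -/
def Hinf (v : ℝ → ℝ) : Set (ℂ → ℂ) :=
  {f | Differentiable ℂ f ∧
    ∃ C : ℝ, ∀ z : ℂ, ‖f z‖ * v ‖z‖ ≤ C}

/-- The weighted sup-norm `‖f‖_v`. -/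
noncomputable def wnorm (v : ℝ → ℝ) (f : ℂ → ℂ) : ℝ :=
  ⨆ z : ℂ, ‖f z‖ * v ‖z‖

/-- A weight: strictly positive, continuous, non-increasing and rapidly
decreasing on `[0,∞)`. -/
def IsWeight (v : ℝ → ℝ) : Prop :=
  (∀ t : ℝ, 0 ≤ t → 0 < v t) ∧ ContinuousOn v (Set.Ici 0) ∧
    AntitoneOn v (Set.Ici 0) ∧
    ∀ k : ℕ, Tendsto (fun t : ℝ => t ^ k * v t) atTop (nhds 0)

/-- A normalized weight: `v ≡ 1` on `[0,1]`. -/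
def NormalizedWeight (v : ℝ → ℝ) : Prop :=
  ∀ t : ℝ, 0 ≤ t → t ≤ 1 → v t = 1

/-- A (log-)convex weight: `t ↦ -log v(eᵗ)` is convex on `ℝ`. -/
def ConvexWeight (v : ℝ → ℝ) : Prop :=
  ConvexOn ℝ Set.univ fun t : ℝ => -Real.log (v (Real.exp t))

/-- Moderate growth for a weight: `v(H·t) ≤ e^H · v(t)²`. -/
def ModerateGrowthW (v : ℝ → ℝ) : Prop :=
  ∃ H : ℝ, 1 ≤ H ∧ ∀ t : ℝ, 0 ≤ t → v (H * t) ≤ Real.exp H * (v t) ^ 2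

/-- Moderate growth (mg) for a sequence: `M_{j+k} ≤ C^{j+k}·M_j·M_k`. -/
def MGseq (M : ℕ → ℝ) : Prop :=
  ∃ C : ℝ, 1 ≤ C ∧ ∀ j k : ℕ, M (j + k) ≤ C ^ (j + k) * M j * M k

/-- The associated weight sequence `M^v_j = sup_{t>0} t^j·v(t)`. -/
noncomputable def assocSeq (v : ℝ → ℝ) (j : ℕ) : ℝ :=
  ⨆ t : Set.Ioi (0 : ℝ), (t : ℝ) ^ j * v t

/-- The unit ball `B_{1/v}(ℂ)` of entire functions bounded by `1/v`. -/
def BClass (v : ℝ → ℝ) : Set (ℂ → ℂ) :=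
  {f | Differentiable ℂ f ∧ ∀ z : ℂ, ‖f z‖ ≤ 1 / v ‖z‖}

/-- The associated growth condition `w̃_v(z) = sup{|f(z)| : f ∈ B_{1/v}}`. -/
noncomputable def wTilde (v : ℝ → ℝ) (z : ℂ) : ℝ :=
  sSup {x : ℝ | ∃ f ∈ BClass v, x = ‖f z‖}

/-- The associated weight `ṽ = 1/w̃_v`, as a function of `t = |z|`. -/
noncomputable def vTilde (v : ℝ → ℝ) (t : ℝ) : ℝ :=
  1 / wTilde v (t : ℂ)

/-- An essential weight: `v ∼ ṽ`. -/
def Essential (v : ℝ → ℝ) : Prop :=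
  ∃ C : ℝ, 1 ≤ C ∧ ∀ t : ℝ, 0 ≤ t →
    v t ≤ C * vTilde v t ∧ vTilde v t ≤ C * v t

/-- `P_v(t) = sup_j t^j/‖z^j‖_v`. -/
noncomputable def Pfun (v : ℝ → ℝ) (t : ℝ) : ℝ :=
  ⨆ j : ℕ, t ^ j / wnorm v fun z : ℂ => z ^ j

/-- The convolved sequence `(M⋆N)_j = min_{0≤k≤j} M_k·N_{j-k}`. -/
noncomputable def convSeq (M N : ℕ → ℝ) (j : ℕ) : ℝ :=
  (Finset.range (j + 1)).inf' Finset.nonempty_range_add_one fun k => M k * N (j - k)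

/-!
Everything runs through `exp (ω_M t) = sup_j t ^ j / M_j`. If `N ≼ M`, then `N_j ≤ n ^ j * M_j` for
some `n`, hence `ω_M t ≤ ω_N (n * t)`, which gives (b), (c) and (d).

Conversely, log-convexity makes the supremum for `N` attained at the index `j` when
`t = N_{j+1} / N_j`, so a bound `b * t ^ j ≤ C * exp (ω_N (c * t))` for all `t` forces
`b * N_j ≤ C * c ^ j`. For (b) take `b = 1 / M_j`. For (c) and (d) test the inclusion on the series
`∑ (z / r_j) ^ j / M_j`, whose positive coefficients bound it from below on the positive axis: this
gives `(N_j / M_j) ^ (1 / j) = O(r_j)`. In (c) the constant `r_j = 2` is allowed; in (d) every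
`r_j → ∞` is, and a sequence that is `O(r)` for all `r → ∞` is bounded.
-/

section Sequences

lemma isBigO_one_of_forall_tendsto_isBigO {E : Type*} [NormedAddCommGroup E] {q : ℕ → E}
    (h : ∀ r : ℕ → ℝ, (∀ j, 0 < r j) → Tendsto r atTop atTop → q =O[atTop] r) :
    q =O[atTop] fun _ => (1 : ℝ) := by
  rw [Asymptotics.isBigO_one_nat_atTop_iff]
  by_contra! hunbdd
  set Q := partialSups fun j => max 1 ‖q j‖
  have le_Q (j : ℕ) : max 1 ‖q j‖ ≤ Q j :=
    le_partialSups (fun j => max 1 ‖q j‖) j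
  have Q_pos (j : ℕ) : 0 < Q j := one_pos.trans_le ((le_max_left _ _).trans (le_Q j))
  have Q_not_bdd : ¬ BddAbove (range Q) := by
    rintro ⟨B, hB⟩
    obtain ⟨j, hj⟩ := hunbdd B
    exact hj.not_ge ((le_max_right _ _).trans ((le_Q j).trans (hB ⟨j, rfl⟩)))
  have sqrt_Q_pos (j : ℕ) : 0 < √(Q j) := Real.sqrt_pos.2 (Q_pos j)
  have sqrt_Q_tendsto : Tendsto (fun j => √(Q j)) atTop atTop :=
    Real.tendsto_sqrt_atTop.comp (tendsto_atTop_atTop_of_monotone' Q.monotone Q_not_bdd)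
  obtain ⟨C, hC⟩ := (Asymptotics.isBigO_nat_atTop_iff
    fun j hj => absurd hj (sqrt_Q_pos j).ne').1 (h _ sqrt_Q_pos sqrt_Q_tendsto)
  have Q_le (n : ℕ) : Q n ≤ max 1 C * √(Q n) := by
    refine partialSups_le _ n _ fun j hjn => ?_
    have one_le_sqrt : 1 ≤ √(Q j) := Real.one_le_sqrt.2 ((le_max_left _ _).trans (le_Q j))
    have q_le : ‖q j‖ ≤ C * √(Q j) := by
      simpa only [Real.norm_of_nonneg (sqrt_Q_pos j).le] using hC j
    calc max 1 ‖q j‖ ≤ max 1 C * √(Q j) := by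
          refine max_le (one_le_mul_of_one_le_of_one_le (le_max_left _ _) one_le_sqrt)
            (q_le.trans ?_)
          gcongr
          exact le_max_right _ _
      _ ≤ max 1 C * √(Q n) := by gcongr
  refine Q_not_bdd ⟨max 1 C ^ 2, forall_mem_range.2 fun n => ?_⟩
  have sqrt_Q_le : √(Q n) ≤ max 1 C := by
    refine le_of_mul_le_mul_right ?_ (sqrt_Q_pos n)
    rw [Real.mul_self_sqrt (Q_pos n).le]
    exact Q_le n
  exact (Real.sqrt_le_left (by positivity)).1 sqrt_Q_le

lemma rpow_one_div_le_max_one_mul {x c C : ℝ} {j : ℕ} (hx : 0 ≤ x) (hc : 0 ≤ c) (hj : j ≠ 0)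
    (h : x ≤ C * c ^ j) : x ^ (1 / (j : ℝ)) ≤ max 1 C * c := by
  rw [one_div, Real.rpow_inv_le_iff_of_pos hx (by positivity) (by positivity),
    Real.rpow_natCast, mul_pow]
  refine h.trans ?_
  gcongr
  exact (le_max_right _ _).trans (le_self_pow₀ (le_max_left _ _) hj)

lemma summable_inv_mul_pow_of_tendsto_atTop {r : ℕ → ℝ} {c : ℝ} (hr : Tendsto r atTop atTop)
    (hc : 0 < c) : Summable fun j => ((c * r j) ^ j)⁻¹ := by
  refine .of_norm_bounded_eventually_nat summable_geometric_two ?_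
  filter_upwards [(hr.const_mul_atTop hc).eventually_ge_atTop 2] with j hj
  rw [Real.norm_of_nonneg (by positivity), one_div_pow, one_div]
  gcongr

/-- The relation `N ≼ M` between weight sequences, condition (a): the roots `(N_j / M_j) ^ (1 / j)`
are bounded. -/
def RootDominated (N M : ℕ → ℝ) : Prop :=
  ∃ S : ℝ, ∀ j : ℕ, 1 ≤ j → (N j / M j) ^ (1 / (j : ℝ)) ≤ S

lemma RootDominated.exists_le_pow_mul {M N : ℕ → ℝ} (h : RootDominated N M)
    (hM : WeightSeq M) (hN : WeightSeq N) :
    ∃ n : ℕ, 1 ≤ n ∧ ∀ j, N j ≤ (n : ℝ) ^ j * M j := by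
  obtain ⟨S, hS⟩ := h
  obtain ⟨n, hn⟩ := exists_nat_ge S
  refine ⟨n + 1, by lia, fun j => ?_⟩
  rcases Nat.eq_zero_or_pos j with rfl | hj
  · simp [hM.2.1, hN.2.1]
  · have root_le : (N j / M j) ^ (1 / (j : ℝ)) ≤ (n + 1 : ℕ) :=
      (hS j hj).trans (hn.trans (by simp))
    rwa [one_div, Real.rpow_inv_le_iff_of_pos (div_pos (hN.1 j) (hM.1 j)).le (by positivity)
      (by positivity), Real.rpow_natCast, div_le_iff₀ (hM.1 j)] at root_le

lemma LogConvexSeq.monotone_ratio {N : ℕ → ℝ} (hlc : LogConvexSeq N) (hN : ∀ j, 0 < N j) :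
    Monotone fun k => N (k + 1) / N k := by
  refine monotone_nat_of_le_succ fun k => ?_
  rw [div_le_div_iff₀ (hN _) (hN _), ← sq]
  exact (hlc (k + 1) (by lia)).trans_eq (mul_comm _ _)

lemma LogConvexSeq.isGreatest_ratio_pow_div {N : ℕ → ℝ} (hlc : LogConvexSeq N)
    (hN : ∀ j, 0 < N j) (j : ℕ) :
    IsGreatest (range fun k => (N (j + 1) / N j) ^ k / N k) ((N (j + 1) / N j) ^ j / N j) := by
  set t := N (j + 1) / N j
  have t_pos : 0 < t := div_pos (hN _) (hN _)
  have succ_eq (k : ℕ) : t ^ (k + 1) / N (k + 1) = t ^ k / N k * (t / (N (k + 1) / N k)) := by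
    have := (hN k).ne'
    have := (hN (k + 1)).ne'
    rw [pow_succ]
    field_simp
  have term_nonneg (k : ℕ) : 0 ≤ t ^ k / N k := div_nonneg (by positivity) (hN k).le
  have increasing : MonotoneOn (fun k => t ^ k / N k) (Iic j) :=
    monotoneOn_of_le_add_one ordConnected_Iic fun k _ hk _ =>
      (le_mul_of_one_le_right (term_nonneg k) ((one_le_div (div_pos (hN _) (hN _))).2
        (hlc.monotone_ratio hN hk))).trans_eq (succ_eq k).symm
  have decreasing : AntitoneOn (fun k => t ^ k / N k) (Ici j) :=
    antitoneOn_of_add_one_le ordConnected_Ici fun k _ hk _ =>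
      (succ_eq k).trans_le (mul_le_of_le_one_right (term_nonneg k)
        ((div_le_one (div_pos (hN _) (hN _))).2 (hlc.monotone_ratio hN hk)))
  refine ⟨⟨j, rfl⟩, forall_mem_range.2 fun k => ?_⟩
  rcases le_total k j with hkj | hjk
  · exact increasing hkj self_mem_Iic hkj
  · exact decreasing self_mem_Ici hjk hjk

end Sequences

section AssociatedWeight

variable {M N : ℕ → ℝ} {t : ℝ}

lemma isLUB_exp_omegaM_of_bddAbove (hM : ∀ j, 0 < M j) (ht : 0 < t)
    (hbdd : BddAbove (range fun j => t ^ j / M j)) :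
    IsLUB (range fun j => t ^ j / M j) (Real.exp (omegaM M t)) := by
  have term_pos (j : ℕ) : 0 < t ^ j / M j := div_pos (pow_pos ht j) (hM j)
  have log_bdd : BddAbove (range fun j => Real.log (t ^ j / M j)) := by
    obtain ⟨B, hB⟩ := hbdd
    exact ⟨Real.log B, forall_mem_range.2 fun j => Real.log_le_log (term_pos j) (hB ⟨j, rfl⟩)⟩
  rw [omegaM, if_neg ht.ne']
  refine ⟨forall_mem_range.2 fun j => ?_, fun B hB => ?_⟩
  · exact (Real.log_le_iff_le_exp (term_pos j)).1 (le_ciSup log_bdd j)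
  · rw [mem_upperBounds, forall_mem_range] at hB
    exact (Real.le_log_iff_exp_le ((term_pos 0).trans_le (hB 0))).1
      (ciSup_le fun j => Real.log_le_log (term_pos j) (hB j))

lemma WeightSeq.bddAbove_range_pow_div (hM : WeightSeq M) (ht : 0 ≤ t) :
    BddAbove (range fun j => t ^ j / M j) := by
  refine IsBoundedUnder.bddAbove_range ⟨1, eventually_map.2 ?_⟩
  filter_upwards [hM.2.2.eventually_ge_atTop t, eventually_ne_atTop 0] with j hj hj0
  rw [div_le_one (hM.1 j)]
  calc t ^ j ≤ (M j ^ (1 / (j : ℝ))) ^ j := by gcongr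
    _ = M j := by rw [one_div, Real.rpow_inv_natCast_pow (hM.1 j).le hj0]

lemma WeightSeq.isLUB_exp_omegaM (hM : WeightSeq M) (ht : 0 ≤ t) :
    IsLUB (range fun j => t ^ j / M j) (Real.exp (omegaM M t)) := by
  rcases ht.eq_or_lt with rfl | ht
  · refine IsGreatest.isLUB ⟨⟨0, by simp [omegaM, hM.2.1]⟩, forall_mem_range.2 fun j => ?_⟩
    rcases j with _ | j <;> simp [omegaM, hM.2.1]
  · exact isLUB_exp_omegaM_of_bddAbove hM.1 ht (hM.bddAbove_range_pow_div ht.le)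

lemma WeightSeq.pow_div_le_exp_omegaM (hM : WeightSeq M) (ht : 0 ≤ t) (j : ℕ) :
    t ^ j / M j ≤ Real.exp (omegaM M t) :=
  (hM.isLUB_exp_omegaM ht).1 ⟨j, rfl⟩

lemma WeightSeq.omegaM_le_omegaM_mul (hM : WeightSeq M) (hN : WeightSeq N) {c : ℝ} (hc : 0 ≤ c)
    (h : ∀ j, N j ≤ c ^ j * M j) (ht : 0 ≤ t) : omegaM M t ≤ omegaM N (c * t) := by
  rw [← Real.exp_le_exp, isLUB_le_iff (hM.isLUB_exp_omegaM ht), mem_upperBounds, forall_mem_range]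
  intro j
  refine le_trans ?_ (hN.pow_div_le_exp_omegaM (by positivity) j)
  rw [div_le_div_iff₀ (hM.1 j) (hN.1 j)]
  calc t ^ j * N j ≤ t ^ j * (c ^ j * M j) := by gcongr; exact h j
    _ = (c * t) ^ j * M j := by ring

lemma LogConvexSeq.exists_exp_omegaM_eq (hlc : LogConvexSeq N) (hN : ∀ j, 0 < N j) (j : ℕ) :
    ∃ t : ℝ, 0 < t ∧ Real.exp (omegaM N t) = t ^ j / N j := by
  have ratio_pos : 0 < N (j + 1) / N j := div_pos (hN _) (hN _)
  have greatest := hlc.isGreatest_ratio_pow_div hN j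
  exact ⟨_, ratio_pos,
    (isLUB_exp_omegaM_of_bddAbove hN ratio_pos greatest.bddAbove).unique greatest.isLUB⟩

lemma LogConvexSeq.mul_le_of_forall_mul_pow_le (hlc : LogConvexSeq N) (hN : ∀ j, 0 < N j)
    {b c C : ℝ} (hc : 0 < c) {j : ℕ}
    (h : ∀ t : ℝ, 0 ≤ t → b * t ^ j ≤ C * Real.exp (omegaM N (c * t))) :
    b * N j ≤ C * c ^ j := by
  obtain ⟨s, s_pos, hs⟩ := hlc.exists_exp_omegaM_eq hN j
  have at_s := h (s / c) (by positivity)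
  rw [mul_div_cancel₀ _ hc.ne', hs, div_pow, ← mul_div_assoc, ← mul_div_assoc,
    div_le_div_iff₀ (by positivity) (hN j)] at at_s
  refine le_of_mul_le_mul_right ?_ (pow_pos s_pos j)
  calc b * N j * s ^ j = b * s ^ j * N j := by ring
    _ ≤ C * s ^ j * c ^ j := at_s
    _ = C * c ^ j * s ^ j := by ring

end AssociatedWeight

section WeightedSpaces

variable {M N : ℕ → ℝ} {c d : ℝ}

lemma Hinf_anti {v w : ℝ → ℝ} (h : ∀ t, 0 ≤ t → w t ≤ v t) : Hinf v ⊆ Hinf w :=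
  fun _ ⟨hf, C, hC⟩ => ⟨hf, C, fun z =>
    (mul_le_mul_of_nonneg_left (h _ (norm_nonneg z)) (norm_nonneg _)).trans (hC z)⟩

lemma mem_Hinf_vMc_iff {f : ℂ → ℂ} :
    f ∈ Hinf (vMc M c) ↔ Differentiable ℂ f ∧
      ∃ C : ℝ, ∀ z : ℂ, ‖f z‖ ≤ C * Real.exp (omegaM M (c * ‖z‖)) := by
  simp only [Hinf, vMc, mem_ofPred_eq, Real.exp_neg, ← div_eq_mul_inv,
    div_le_iff₀ (Real.exp_pos _)]

lemma WeightSeq.Hinf_vMc_subset (hM : WeightSeq M) (hN : WeightSeq N) (hc : 0 ≤ c) (hd : 0 ≤ d)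
    (h : ∀ j, N j ≤ c ^ j * M j) : Hinf (vMc M d) ⊆ Hinf (vMc N (c * d)) := by
  refine Hinf_anti fun t ht => Real.exp_le_exp.2 (neg_le_neg ?_)
  rw [mul_assoc]
  exact hM.omegaM_le_omegaM_mul hN hc h (by positivity)

/-- The test function `∑ (z / r_j) ^ j / M_j`. The faster `r` grows, the smaller its
growth; positivity of the coefficients makes it large on the positive real axis. -/
noncomputable def testSeries (M r : ℕ → ℝ) (z : ℂ) : ℂ :=
  ∑' j : ℕ, (z / r j) ^ j / M j

lemma WeightSeq.norm_div_pow_div_le (hM : WeightSeq M) (hc : 0 < c) {ρ R : ℝ} (hρ : 0 < ρ)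
    {z : ℂ} (hz : ‖z‖ ≤ R) (j : ℕ) :
    ‖(z / ρ) ^ j / (M j : ℂ)‖ ≤ ((c * ρ) ^ j)⁻¹ * Real.exp (omegaM M (c * R)) := by
  have hR : 0 ≤ R := (norm_nonneg z).trans hz
  have hMj := hM.1 j
  calc ‖(z / ρ) ^ j / (M j : ℂ)‖ = (‖z‖ / ρ) ^ j / M j := by
        rw [norm_div, norm_pow, norm_div, Complex.norm_of_nonneg hρ.le,
          Complex.norm_of_nonneg hMj.le]
    _ ≤ (R / ρ) ^ j / M j := by gcongr
    _ = ((c * ρ) ^ j)⁻¹ * ((c * R) ^ j / M j) := by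
        rw [div_pow, mul_pow, mul_pow]
        field_simp
    _ ≤ ((c * ρ) ^ j)⁻¹ * Real.exp (omegaM M (c * R)) := by
        gcongr
        exact hM.pow_div_le_exp_omegaM (by positivity) j

variable {r : ℕ → ℝ}

lemma WeightSeq.testSeries_mem_Hinf (hM : WeightSeq M) (hr : ∀ j, 0 < r j) (hc : 0 < c)
    (hs : Summable fun j => ((c * r j) ^ j)⁻¹) : testSeries M r ∈ Hinf (vMc M c) := by
  refine mem_Hinf_vMc_iff.2 ⟨fun z => ?_, ∑' j, ((c * r j) ^ j)⁻¹, fun z => ?_⟩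
  · have on_ball : DifferentiableOn ℂ (testSeries M r) (Metric.ball 0 (‖z‖ + 1)) :=
      Complex.differentiableOn_tsum_of_summable_norm (hs.mul_right _) (fun j => by fun_prop)
        Metric.isOpen_ball fun j w hw =>
          hM.norm_div_pow_div_le hc (hr j) (mem_ball_zero_iff.1 hw).le j
    exact on_ball.differentiableAt (Metric.isOpen_ball.mem_nhds (by simp))
  · rw [← tsum_mul_right]
    exact tsum_of_norm_bounded (hs.mul_right _).hasSum
      fun j => hM.norm_div_pow_div_le hc (hr j) le_rfl j

lemma WeightSeq.div_pow_div_le_norm_testSeries (hM : WeightSeq M) (hr : ∀ j, 0 < r j)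
    (hc : 0 < c) (hs : Summable fun j => ((c * r j) ^ j)⁻¹) {t : ℝ} (ht : 0 ≤ t) (j : ℕ) :
    (t / r j) ^ j / M j ≤ ‖testSeries M r t‖ := by
  have term_nonneg (i : ℕ) : 0 ≤ (t / r i) ^ i / M i :=
    div_nonneg (pow_nonneg (div_nonneg ht (hr i).le) i) (hM.1 i).le
  have summable_terms : Summable fun i => (t / r i) ^ i / M i := by
    rw [← Complex.summable_ofReal]
    push_cast
    exact .of_norm_bounded (hs.mul_right _)
      fun i => hM.norm_div_pow_div_le hc (hr i) (Complex.norm_of_nonneg ht).le i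
  have testSeries_eq : testSeries M r t = ((∑' i, (t / r i) ^ i / M i : ℝ) : ℂ) := by
    push_cast [testSeries]
    rfl
  rw [testSeries_eq, Complex.norm_of_nonneg (tsum_nonneg term_nonneg)]
  exact summable_terms.le_tsum j fun i _ => term_nonneg i

lemma WeightSeq.exists_root_le_mul_of_testSeries_mem_Hinf (hM : WeightSeq M)
    (hN : ∀ j, 0 < N j) (hlc : LogConvexSeq N) (hr : ∀ j, 0 < r j) (hc : 0 < c)
    (hs : Summable fun j => ((c * r j) ^ j)⁻¹) (hd : 0 < d)
    (h : testSeries M r ∈ Hinf (vMc N d)) :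
    ∃ C : ℝ, ∀ j : ℕ, 1 ≤ j → (N j / M j) ^ (1 / (j : ℝ)) ≤ C * r j := by
  obtain ⟨-, C, hC⟩ := mem_Hinf_vMc_iff.1 h
  refine ⟨max 1 C * d, fun j hj => ?_⟩
  have hMj := hM.1 j
  have hrj := hr j
  have coeff_mul_le : (r j ^ j * M j)⁻¹ * N j ≤ C * d ^ j := by
    refine hlc.mul_le_of_forall_mul_pow_le hN hd fun t ht => ?_
    calc (r j ^ j * M j)⁻¹ * t ^ j = (t / r j) ^ j / M j := by
          rw [div_pow]
          field_simp
      _ ≤ ‖testSeries M r t‖ := hM.div_pow_div_le_norm_testSeries hr hc hs ht j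
      _ ≤ C * Real.exp (omegaM N (d * t)) := by
          simpa only [Complex.norm_of_nonneg ht] using hC t
  have quotient_le : N j / M j ≤ C * (d * r j) ^ j := by
    calc N j / M j = (r j ^ j * M j)⁻¹ * N j * r j ^ j := by field_simp
      _ ≤ C * d ^ j * r j ^ j := by gcongr
      _ = C * (d * r j) ^ j := by ring
  rw [mul_assoc]
  exact rpow_one_div_le_max_one_mul (div_nonneg (hN j).le hMj.le) (by positivity) (by lia)
    quotient_le

end WeightedSpaces

section Characterizations

variable {M N : ℕ → ℝ}

lemma WeightSeq.rootDominated_of_vM_le (hM : WeightSeq M) (hN : ∀ j, 0 < N j)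
    (hlc : LogConvexSeq N) {c C : ℝ} (hc : 0 < c)
    (h : ∀ t : ℝ, 0 ≤ t → vM N (c * t) ≤ C * vM M t) : RootDominated N M := by
  refine ⟨max 1 C * c, fun j hj => ?_⟩
  refine rpow_one_div_le_max_one_mul (div_nonneg (hN j).le (hM.1 j).le) hc.le (by lia) ?_
  rw [div_eq_inv_mul]
  refine hlc.mul_le_of_forall_mul_pow_le hN hc fun t ht => ?_
  have exp_le : Real.exp (omegaM M t) ≤ C * Real.exp (omegaM N (c * t)) := by
    have h_t := h t ht
    rwa [vM, vM, Real.exp_neg, Real.exp_neg, ← div_eq_mul_inv, inv_eq_one_div,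
      div_le_div_iff₀ (Real.exp_pos _) (Real.exp_pos _), one_mul] at h_t
  calc (M j)⁻¹ * t ^ j = t ^ j / M j := (div_eq_inv_mul _ _).symm
    _ ≤ Real.exp (omegaM M t) := hM.pow_div_le_exp_omegaM ht j
    _ ≤ C * Real.exp (omegaM N (c * t)) := exp_le

lemma WeightSeq.rootDominated_of_iUnion_Hinf_subset (hM : WeightSeq M) (hN : ∀ j, 0 < N j)
    (hlc : LogConvexSeq N)
    (h : (⋃ n : {n : ℕ // 1 ≤ n}, Hinf (vMc M n.1)) ⊆
      ⋃ n : {n : ℕ // 1 ≤ n}, Hinf (vMc N n.1)) : RootDominated N M := by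
  have summable_geom : Summable fun j : ℕ => (((1 : ℕ) * 2 : ℝ) ^ j)⁻¹ := by
    simpa using summable_geometric_two
  have mem_union := h (mem_iUnion.2 ⟨⟨1, le_rfl⟩,
    hM.testSeries_mem_Hinf (fun _ => two_pos) (by simp) summable_geom⟩)
  obtain ⟨⟨n, hn⟩, mem_n⟩ := mem_iUnion.1 mem_union
  obtain ⟨C, hC⟩ := hM.exists_root_le_mul_of_testSeries_mem_Hinf hN hlc (fun _ => two_pos)
    (by simp) summable_geom (Nat.cast_pos.2 hn) mem_n
  exact ⟨C * 2, hC⟩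

lemma WeightSeq.rootDominated_of_iInter_Hinf_subset (hM : WeightSeq M) (hN : ∀ j, 0 < N j)
    (hlc : LogConvexSeq N)
    (h : (⋂ c : {c : ℝ // 0 < c}, Hinf (vMc M c.1)) ⊆
      ⋂ c : {c : ℝ // 0 < c}, Hinf (vMc N c.1)) : RootDominated N M := by
  have root_isBigO_one :
      (fun j : ℕ => (N j / M j) ^ (1 / (j : ℝ))) =O[atTop] fun _ => (1 : ℝ) := by
    refine isBigO_one_of_forall_tendsto_isBigO fun r hr r_tendsto => ?_
    have mem_inter := h (mem_iInter.2 fun c => hM.testSeries_mem_Hinf hr c.2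
      (summable_inv_mul_pow_of_tendsto_atTop r_tendsto c.2))
    obtain ⟨C, hC⟩ := hM.exists_root_le_mul_of_testSeries_mem_Hinf hN hlc hr one_pos
      (summable_inv_mul_pow_of_tendsto_atTop r_tendsto one_pos) one_pos
      (mem_iInter.1 mem_inter ⟨1, one_pos⟩)
    refine .of_bound C ?_
    filter_upwards [eventually_ge_atTop 1] with j hj
    rw [Real.norm_of_nonneg (Real.rpow_nonneg (div_pos (hN j) (hM.1 j)).le _),
      Real.norm_of_nonneg (hr j).le]
    exact hC j hj
  obtain ⟨S, hS⟩ := (Asymptotics.isBigO_one_nat_atTop_iff).1 root_isBigO_one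
  exact ⟨S, fun j _ => (le_abs_self _).trans (hS j)⟩

theorem WeightSeq.rootDominated_iff_vM_le (hM : WeightSeq M) (hN : WeightSeq N)
    (hlc : LogConvexSeq N) :
    RootDominated N M ↔ ∃ c : ℝ, 1 ≤ c ∧ ∃ C : ℝ, 1 ≤ C ∧
      ∀ t : ℝ, 0 ≤ t → vM N (c * t) ≤ C * vM M t := by
  refine ⟨fun h => ?_, fun ⟨c, hc, C, _, hle⟩ =>
    hM.rootDominated_of_vM_le hN.1 hlc (one_pos.trans_le hc) hle⟩
  obtain ⟨n, hn, hle⟩ := h.exists_le_pow_mul hM hN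
  refine ⟨n, by exact_mod_cast hn, 1, le_rfl, fun t ht => ?_⟩
  rw [one_mul]
  exact Real.exp_le_exp.2 (neg_le_neg (hM.omegaM_le_omegaM_mul hN n.cast_nonneg hle ht))

theorem WeightSeq.rootDominated_iff_iUnion_Hinf_subset (hM : WeightSeq M) (hN : WeightSeq N)
    (hlc : LogConvexSeq N) :
    RootDominated N M ↔ (⋃ n : {n : ℕ // 1 ≤ n}, Hinf (vMc M n.1)) ⊆
      ⋃ n : {n : ℕ // 1 ≤ n}, Hinf (vMc N n.1) := by
  refine ⟨fun h => ?_, hM.rootDominated_of_iUnion_Hinf_subset hN.1 hlc⟩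
  obtain ⟨n, hn, hle⟩ := h.exists_le_pow_mul hM hN
  refine iUnion_subset fun m f hf => mem_iUnion.2 ⟨⟨n * m.1, Nat.mul_pos hn m.2⟩, ?_⟩
  rw [Nat.cast_mul]
  exact hM.Hinf_vMc_subset hN n.cast_nonneg m.1.cast_nonneg hle hf

theorem WeightSeq.rootDominated_iff_iInter_Hinf_subset (hM : WeightSeq M) (hN : WeightSeq N)
    (hlc : LogConvexSeq N) :
    RootDominated N M ↔ (⋂ c : {c : ℝ // 0 < c}, Hinf (vMc M c.1)) ⊆
      ⋂ c : {c : ℝ // 0 < c}, Hinf (vMc N c.1) := by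
  refine ⟨fun h => ?_, hM.rootDominated_of_iInter_Hinf_subset hN.1 hlc⟩
  obtain ⟨n, hn, hle⟩ := h.exists_le_pow_mul hM hN
  have n_pos : (0 : ℝ) < n := Nat.cast_pos.2 hn
  refine subset_iInter fun c f hf => ?_
  have mem_div : f ∈ Hinf (vMc M (c.1 / n)) := mem_iInter.1 hf ⟨c.1 / n, div_pos c.2 n_pos⟩
  have mem_mul := hM.Hinf_vMc_subset hN n_pos.le (div_pos c.2 n_pos).le hle mem_div
  rwa [mul_div_cancel₀ _ n_pos.ne'] at mem_mul

end Characterizations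

/-- Theorem: for a weight sequence `M` and a log-convex weight sequence `N`,
the conditions `N ≼ M`, `v_M ≼_𝔠 v_N`, inclusion of the inductive-type unions
and inclusion of the projective-type intersections are all equivalent. -/
theorem stmt9 (M N : ℕ → ℝ) (hM : WeightSeq M) (hN : WeightSeq N)
    (hNlc : LogConvexSeq N) :
    ((∃ S : ℝ, ∀ j : ℕ, 1 ≤ j → (N j / M j) ^ (1 / (j : ℝ)) ≤ S) ↔
      (∃ c : ℝ, 1 ≤ c ∧ ∃ C : ℝ, 1 ≤ C ∧
        ∀ t : ℝ, 0 ≤ t → vM N (c * t) ≤ C * vM M t)) ∧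
    ((∃ S : ℝ, ∀ j : ℕ, 1 ≤ j → (N j / M j) ^ (1 / (j : ℝ)) ≤ S) ↔
      (⋃ n : {n : ℕ // 1 ≤ n}, Hinf (vMc M (n.1 : ℝ))) ⊆
        ⋃ n : {n : ℕ // 1 ≤ n}, Hinf (vMc N (n.1 : ℝ))) ∧
    ((∃ S : ℝ, ∀ j : ℕ, 1 ≤ j → (N j / M j) ^ (1 / (j : ℝ)) ≤ S) ↔
      (⋂ c : {c : ℝ // 0 < c}, Hinf (vMc M c.1)) ⊆
        ⋂ c : {c : ℝ // 0 < c}, Hinf (vMc N c.1)) :=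
  ⟨hM.rootDominated_iff_vM_le hN hNlc, hM.rootDominated_iff_iUnion_Hinf_subset hN hNlc,
    hM.rootDominated_iff_iInter_Hinf_subset hN hNlc⟩
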